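/- arXiv:2303.00793 — 3 statements merged into one kernel-verified Lean document; each statement's English description precedes it below -/
import Mathlib

section
/- Fix a predicate p : α → β → Bool. Define join : List (α ⊕ β) → List (α × β) by a single left-to-right pass maintaining two accumulators W₁ : List α and W₂ : List β (both initially empty) and an output list (initially empty): upon Sum.inl a, append to the output the list (W₂.filter (fun b => p a b)).map (fun b => (a, b)) and then append a to W₁; upon Sum.inr b, append to the output the list (W₁.filter (fun a => p a b)).map (fun a => (a, b)) and then append b to W₂. Then for every list s : List (α ⊕ β), the multiset of pairs output by join s equals the multiset of all pairs (a, b) with a ranging over the left injections of s, b ranging over the right injections of s, and p a b = true: for every such pair, join s outputs (a, b) exactly (multiplicity of a among the left injections of s) · (multiplicity of b among the right injections of s) times, and join s outputs no pair with p a b = false. In particular the result is independent, as a multiset, of the interleaving order of left and right elements in s (correctness of the merged-window matching pass of Listing 2, the core of Theorem 2). -/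
/-- One step of the merged-window matching pass of Listing 2: the accumulator
carries the two windows `W₁ : List α`, `W₂ : List β` and the output list.
On a left element `a`, match it against all previously scanned right elements
and then store it; symmetrically for a right element `b`. -/
def joinStep {α β : Type*} (p : α → β → Bool) :
    List α × List β × List (α × β) → α ⊕ β → List α × List β × List (α × β)
  | (w1, w2, out), Sum.inl a =>
      (w1 ++ [a], w2, out ++ (w2.filter (fun b => p a b)).map (fun b => (a, b)))
  | (w1, w2, out), Sum.inr b =>
      (w1, w2 ++ [b], out ++ (w1.filter (fun a => p a b)).map (fun a => (a, b)))

/-- The merged-window join: a single left-to-right pass over the merged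
stream, starting from empty windows and empty output. -/
def join {α β : Type*} (p : α → β → Bool) (s : List (α ⊕ β)) : List (α × β) :=
  (s.foldl (joinStep p) ([], [], [])).2.2

theorem count_left {α β : Type*} [DecidableEq α] [DecidableEq β]
    (p : α → β → Bool) (x a : α) (b : β) (w : List β) :
    ((w.filter (fun b => p x b)).map (fun b => (x, b))).count (a, b)
      = if x = a ∧ p a b then w.count b else 0 := by
  induction w with
  | nil => simp
  | cons y w ih =>
    by_cases h : p x y <;> simp only [List.filter_cons, h, if_true, List.map_cons,
      List.count_cons, ih, beq_iff_eq, Prod.mk.injEq] <;> grind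

theorem count_right {α β : Type*} [DecidableEq α] [DecidableEq β]
    (p : α → β → Bool) (a : α) (x b : β) (w : List α) :
    ((w.filter (fun a => p a x)).map (fun a => (a, x))).count (a, b)
      = if x = b ∧ p a b then w.count a else 0 := by
  induction w with
  | nil => simp
  | cons y w ih =>
    by_cases h : p y x <;> simp only [List.filter_cons, h, if_true, List.map_cons,
      List.count_cons, ih, beq_iff_eq, Prod.mk.injEq] <;> grind

theorem join_inv {α β : Type*} [DecidableEq α] [DecidableEq β]
    (p : α → β → Bool) (s : List (α ⊕ β)) (a : α) (b : β) :
    (s.foldl (joinStep p) ([], [], [])).1.count a = s.count (Sum.inl a) ∧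
    (s.foldl (joinStep p) ([], [], [])).2.1.count b = s.count (Sum.inr b) ∧
    (s.foldl (joinStep p) ([], [], [])).2.2.count (a, b)
      = if p a b then s.count (Sum.inl a) * s.count (Sum.inr b) else 0 := by
  induction s using List.reverseRecOn with
  | nil => simp
  | append_singleton s x ih =>
    rw [List.foldl_append]
    generalize s.foldl (joinStep p) ([], [], []) = st at ih
    obtain ⟨w1, w2, out⟩ := st
    obtain ⟨h1, h2, h3⟩ := ih
    dsimp only at h1 h2 h3
    cases x with
    | inl x =>
      have e1 : ((Sum.inl x : α ⊕ β) == Sum.inl a) = (x == a) := rfl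
      have e2 : ((Sum.inl x : α ⊕ β) == Sum.inr b) = false := rfl
      simp only [List.foldl_cons, List.foldl_nil, joinStep, List.count_append, count_left,
        h1, h2, h3, List.count_singleton, e1, e2, beq_iff_eq]
      by_cases hx : x = a <;> by_cases hp : p a b <;> simp [hx, hp, add_mul]
    | inr x =>
      have e1 : ((Sum.inr x : α ⊕ β) == Sum.inr b) = (x == b) := rfl
      have e2 : ((Sum.inr x : α ⊕ β) == Sum.inl a) = false := rfl
      simp only [List.foldl_cons, List.foldl_nil, joinStep, List.count_append, count_right,
        h1, h2, h3, List.count_singleton, e1, e2, beq_iff_eq]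
      by_cases hx : x = b <;> by_cases hp : p a b <;> simp [hx, hp, mul_add]

/-- Correctness of the merged-window matching pass (core of Theorem 2): as a
multiset, the output of `join p s` consists of exactly the pairs `(a, b)` with
`a` a left injection of `s`, `b` a right injection of `s`, and `p a b = true`;
each such pair appears with multiplicity
(count of `a` among left injections) · (count of `b` among right injections),
and no pair with `p a b = false` is output.  In particular the result is
independent, as a multiset, of the interleaving order of `s`. -/
theorem join_count {α β : Type*} [DecidableEq α] [DecidableEq β]
    (p : α → β → Bool) (s : List (α ⊕ β)) (a : α) (b : β) :
    (join p s).count (a, b)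
      = if p a b then s.count (Sum.inl a) * s.count (Sum.inr b) else 0 := by
  exact (join_inv p s a b).2.2
end

section
/- Let τ : ℕ and T : List β. The Unfold loop processes the embedded tuple (τ, T, −1) by producing index-carrying tuples (τ, T, j) for j = 0, 1, …, incrementing the index by one per loop iteration as long as the index is smaller than T.length, while the downstream emitting operator outputs (τ, T.get j) for each received index j < T.length. Then the loop performs exactly T.length emitting iterations before terminating, and the resulting output list (List.range T.length).map (fun j => (τ, T.get j)) equals T.map (fun b => (τ, b)): every element embedded in (τ, T, −1) is emitted exactly once, each with timestamp τ (deterministic functional core of Theorem 3). -/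
/-- The emitting loop of the Unfold operator (Theorem 3, Listing 4): starting
from index `j`, as long as the carried index is smaller than `T.length`, the
downstream operator emits `(τ, T.get j)` and the loop increments the index. -/
def unfoldLoop {β : Type*} (τ : ℕ) (T : List β) : ℕ → List (ℕ × β)
  | j =>
    if h : j < T.length then (τ, T.get ⟨j, h⟩) :: unfoldLoop τ T (j + 1)
    else []
termination_by j => T.length - j
decreasing_by omega

theorem unfoldLoop_eq_drop_aux {β : Type*} (τ : ℕ) (T : List β) (n : ℕ) :
    ∀ j, T.length - j = n → unfoldLoop τ T j = (T.drop j).map (fun b => (τ, b)) := by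
  induction n with
  | zero =>
    intro j hj
    have h : ¬ j < T.length := by omega
    rw [unfoldLoop, dif_neg h, List.drop_eq_nil_of_le (by omega)]
    rfl
  | succ n ih =>
    intro j hj
    have h : j < T.length := by omega
    rw [unfoldLoop, dif_pos h, ih (j + 1) (by omega), List.drop_eq_getElem_cons h]
    rfl

/-- Deterministic functional core of Theorem 3: processing the embedded tuple
`(τ, T, -1)` the loop performs exactly `T.length` emitting iterations before
terminating, and the resulting output list equals `T.map (fun b => (τ, b))`:
every element embedded in `(τ, T, -1)` is emitted exactly once, each with
timestamp `τ`. -/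
theorem unfoldLoop_eq_map {β : Type*} (τ : ℕ) (T : List β) :
    unfoldLoop τ T 0 = T.map (fun b => (τ, b)) ∧
    (unfoldLoop τ T 0).length = T.length := by
  have h : unfoldLoop τ T 0 = T.map (fun b => (τ, b)) := by
    simpa using unfoldLoop_eq_drop_aux τ T _ 0 rfl
  exact ⟨h, by rw [h, List.length_map]⟩
end

section
/- Let P and δ be natural numbers with δ > 0 and δ ∣ P, and let T : ℕ → Multiset α assign to each timestamp τ the multiset of input tuples with timestamp τ, with T τ = 0 whenever δ ∤ τ and T τ ≠ 0 for only finitely many τ. Define the state multiset s : ℕ → Multiset α recursively by s ℓ = (s (ℓ−1) for ℓ ≥ 1, and 0 for ℓ = 0) + Σ over all τ processed in window instance ℓ (i.e., ℓ·P ≤ τ < ℓ·P + P + δ and τ ≠ ℓ·P + P) of T τ. Then for every ℓ : ℕ, s ℓ = Σ_{τ < (ℓ+1)·P} T τ: the state produced for window instance ℓ contains every input tuple with timestamp less than (ℓ+1)·P exactly once, so each input tuple is incorporated into the evolving state exactly once and the state spans the entire (event-time-unbounded) history of the stream (core of Lemma 6: a looping Aggregate with sliding window of advance P and size P + δ maintains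 an unbounded state correctly). -/
/-- The set of timestamps *processed* in instance `ℓ` of the sliding window
with advance `P` and size `P + δ`: those `τ` with `ℓ·P ≤ τ < ℓ·P + P + δ`
and `τ ≠ ℓ·P + P`. -/
def procSet (P δ ℓ : ℕ) : Finset ℕ :=
  (Finset.Ico (ℓ * P) (ℓ * P + P + δ)).filter (fun τ => τ ≠ ℓ * P + P)

/-- The evolving state (as a multiset of absorbed input tuples) of the looping
Aggregate of Lemma 6: the state of instance `ℓ` is the state poured from
instance `ℓ - 1` (empty for `ℓ = 0`) plus all input tuples processed in
instance `ℓ`. -/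
def stateMul {α : Type*} (P δ : ℕ) (T : ℕ → Multiset α) : ℕ → Multiset α
  | 0 => ∑ τ ∈ procSet P δ 0, T τ
  | ℓ + 1 => stateMul P δ T ℓ + ∑ τ ∈ procSet P δ (ℓ + 1), T τ

theorem procSet_sum_aux {α : Type*} (P δ : ℕ) (hP : δ ∣ P)
    (T : ℕ → Multiset α) (hT0 : ∀ τ, ¬ δ ∣ τ → T τ = 0) (l : ℕ) :
    ∑ τ ∈ procSet P δ l, T τ = ∑ τ ∈ Finset.Ico (l * P) (l * P + P), T τ := by
  symm
  apply Finset.sum_subset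
  · intro x hx
    simp only [procSet, Finset.mem_filter, Finset.mem_Ico] at hx ⊢
    omega
  · intro x hx hx2
    simp only [procSet, Finset.mem_filter, Finset.mem_Ico] at hx hx2
    apply hT0
    intro hd
    have h1 : δ ∣ l * P + P := (hP.mul_left l).add hP
    have h2 : δ ∣ x - (l * P + P) := Nat.dvd_sub hd h1
    have h3 := Nat.le_of_dvd (by omega) h2
    omega

/-- Core of Lemma 6: a looping Aggregate with sliding window of advance `P`
and size `P + δ` maintains an unbounded state correctly: the state produced
for window instance `ℓ` contains every input tuple with timestamp less than
`(ℓ+1)·P` exactly once. -/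
theorem stateMul_eq_history {α : Type*} (P δ : ℕ) (hδ : 0 < δ) (hP : δ ∣ P)
    (T : ℕ → Multiset α) (hT0 : ∀ τ, ¬ δ ∣ τ → T τ = 0)
    (hfin : {τ | T τ ≠ 0}.Finite) :
    ∀ ℓ : ℕ, stateMul P δ T ℓ = ∑ τ ∈ Finset.range ((ℓ + 1) * P), T τ := by
  intro l
  induction l with
  | zero =>
    rw [stateMul, procSet_sum_aux P δ hP T hT0]
    rw [Finset.range_eq_Ico, Nat.zero_mul, Nat.zero_add, Nat.zero_add, Nat.one_mul]
  | succ n ih =>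
    rw [stateMul, ih, procSet_sum_aux P δ hP T hT0, Finset.range_eq_Ico, Finset.range_eq_Ico,
      Finset.sum_Ico_consecutive _ (Nat.zero_le _) (Nat.le_add_right _ _), ← Nat.succ_mul]
end
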